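/- For every s ∈ ℝ and every n ∈ ℕ there exists a constant C > 0 (depending only on s and n) such that for all μ with 0 < μ ≤ 1 and all ξ > 0, one has ⟨ξ⟩^{n−s} · | dⁿ/dξⁿ ( √(T_μ(ξ))·⟨ξ⟩^{s} ) | ≤ C. (In other words, √(T_μ)·⟨·⟩^{s} belongs to the symbol class S^{s} with seminorms bounded uniformly in μ ∈ (0,1].) -/

import Mathlib

/-- The symbol `T_μ(ξ) = tanh(√μ ξ)/(√μ ξ)` for `ξ > 0`. -/
noncomputable def Tpos (μ ξ : ℝ) : ℝ := Real.tanh (Real.sqrt μ * ξ) / (Real.sqrt μ * ξ)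

/-- Symbol-type bounds of order `m`, up to `n` derivatives, uniform in the index. -/
def SymB {ι : Type} (U : Set ℝ) : ℕ → ℝ → (ι → ℝ → ℝ) → Prop
  | 0, m, f => ∃ C : ℝ, ∀ i, ∀ x ∈ U, |f i x| ≤ C * (1 + x ^ 2) ^ (m / 2)
  | (n + 1), m, f => (∃ C : ℝ, ∀ i, ∀ x ∈ U, |f i x| ≤ C * (1 + x ^ 2) ^ (m / 2)) ∧
      (∀ i, ∀ x ∈ U, DifferentiableAt ℝ (f i) x) ∧ SymB U n (m - 1) (fun i => deriv (f i))

theorem SymB.zero {ι : Type} {U : Set ℝ} {n : ℕ} {m : ℝ} {f : ι → ℝ → ℝ}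
    (h : SymB U n m f) : ∃ C : ℝ, ∀ i, ∀ x ∈ U, |f i x| ≤ C * (1 + x ^ 2) ^ (m / 2) := by
  cases n with
  | zero => exact h
  | succ n => exact h.1

theorem SymB.pred {ι : Type} {U : Set ℝ} {n : ℕ} : ∀ {m : ℝ} {f : ι → ℝ → ℝ},
    SymB U (n + 1) m f → SymB U n m f := by
  induction n with
  | zero => intro m f h; exact h.1
  | succ n ih => intro m f h; exact ⟨h.1, h.2.1, ih h.2.2⟩

theorem SymB.congr {ι : Type} {U : Set ℝ} (hU : IsOpen U) {n : ℕ} :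
    ∀ {m : ℝ} {f g : ι → ℝ → ℝ}, SymB U n m f → (∀ i, ∀ x ∈ U, g i x = f i x) →
    SymB U n m g := by
  induction n with
  | zero =>
    intro m f g ⟨C, hC⟩ hg
    exact ⟨C, fun i x hx => by rw [hg i x hx]; exact hC i x hx⟩
  | succ n ih =>
    intro m f g ⟨⟨C, hC⟩, hd, h⟩ hg
    have he : ∀ i, ∀ x ∈ U, g i =ᶠ[nhds x] f i := fun i x hx => by
      filter_upwards [hU.mem_nhds hx] with y hy using hg i y hy
    refine ⟨⟨C, fun i x hx => by rw [hg i x hx]; exact hC i x hx⟩, ?_, ih h ?_⟩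
    · intro i x hx; exact (he i x hx).differentiableAt_iff.2 (hd i x hx)
    · intro i x hx; exact (he i x hx).deriv_eq

/-- Constructor with an explicit derivative. -/
theorem SymB.mk' {ι : Type} {U : Set ℝ} (hU : IsOpen U) {n : ℕ} {m : ℝ} {f g : ι → ℝ → ℝ}
    (h0 : ∃ C : ℝ, ∀ i, ∀ x ∈ U, |f i x| ≤ C * (1 + x ^ 2) ^ (m / 2))
    (hd : ∀ i, ∀ x ∈ U, HasDerivAt (f i) (g i x) x) (hg : SymB U n (m - 1) g) :
    SymB U (n + 1) m f :=
  ⟨h0, fun i x hx => (hd i x hx).differentiableAt,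
    SymB.congr hU hg (fun i x hx => (hd i x hx).deriv)⟩

theorem wt_pos (x a : ℝ) : 0 < (1 + x ^ 2) ^ a := Real.rpow_pos_of_pos (by positivity) _

theorem SymB.add {ι : Type} {U : Set ℝ} (hU : IsOpen U) {n : ℕ} :
    ∀ {m : ℝ} {f g : ι → ℝ → ℝ}, SymB U n m f → SymB U n m g →
    SymB U n m (fun i x => f i x + g i x) := by
  have h0 : ∀ {m : ℝ} {f g : ι → ℝ → ℝ},
      (∃ C : ℝ, ∀ i, ∀ x ∈ U, |f i x| ≤ C * (1 + x ^ 2) ^ (m / 2)) →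
      (∃ C : ℝ, ∀ i, ∀ x ∈ U, |g i x| ≤ C * (1 + x ^ 2) ^ (m / 2)) →
      (∃ C : ℝ, ∀ i, ∀ x ∈ U, |f i x + g i x| ≤ C * (1 + x ^ 2) ^ (m / 2)) := by
    rintro m f g ⟨C, hC⟩ ⟨D, hD⟩
    refine ⟨C + D, fun i x hx => ?_⟩
    have := abs_add_le (f i x) (g i x)
    have h1 := hC i x hx
    have h2 := hD i x hx
    linarith
  induction n with
  | zero => intro m f g hf hg; exact h0 hf hg
  | succ n ih =>
    intro m f g hf hg
    exact SymB.mk' hU (h0 hf.1 hg.1)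
      (fun i x hx => (hf.2.1 i x hx).hasDerivAt.add (hg.2.1 i x hx).hasDerivAt) (ih hf.2.2 hg.2.2)

theorem SymB.mul {ι : Type} {U : Set ℝ} (hU : IsOpen U) {n : ℕ} :
    ∀ {m k : ℝ} {f g : ι → ℝ → ℝ}, SymB U n m f → SymB U n k g →
    SymB U n (m + k) (fun i x => f i x * g i x) := by
  have h0 : ∀ {m k : ℝ} {f g : ι → ℝ → ℝ},
      (∃ C : ℝ, ∀ i, ∀ x ∈ U, |f i x| ≤ C * (1 + x ^ 2) ^ (m / 2)) →
      (∃ C : ℝ, ∀ i, ∀ x ∈ U, |g i x| ≤ C * (1 + x ^ 2) ^ (k / 2)) →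
      (∃ C : ℝ, ∀ i, ∀ x ∈ U, |f i x * g i x| ≤ C * (1 + x ^ 2) ^ ((m + k) / 2)) := by
    rintro m k f g ⟨C, hC⟩ ⟨D, hD⟩
    refine ⟨C * D, fun i x hx => ?_⟩
    have h1 := hC i x hx
    have h2 := hD i x hx
    rw [abs_mul, add_div, Real.rpow_add (by positivity)]
    calc _ ≤ (C * (1 + x ^ 2) ^ (m / 2)) * (D * (1 + x ^ 2) ^ (k / 2)) :=
          mul_le_mul h1 h2 (abs_nonneg _) ((abs_nonneg _).trans h1)
      _ = _ := by ring
  induction n with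
  | zero => intro m k f g hf hg; exact h0 hf hg
  | succ n ih =>
    intro m k f g hf hg
    refine SymB.mk' hU (h0 hf.1 hg.1)
      (fun i x hx => (hf.2.1 i x hx).hasDerivAt.mul (hg.2.1 i x hx).hasDerivAt) ?_
    refine SymB.add hU ?_ ?_
    · have := ih hf.2.2 hg.pred
      rwa [show m - 1 + k = m + k - 1 by ring] at this
    · have := ih hf.pred hg.2.2
      rwa [show m + (k - 1) = m + k - 1 by ring] at this

theorem SymB.zeroFun {ι : Type} {U : Set ℝ} (hU : IsOpen U) {n : ℕ} :
    ∀ {m : ℝ}, SymB U n m (fun (_ : ι) (_ : ℝ) => (0 : ℝ)) := by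
  induction n with
  | zero => intro m; exact ⟨0, by simp⟩
  | succ n ih =>
    intro m
    exact SymB.mk' hU ⟨0, by simp⟩ (fun i x hx => hasDerivAt_const x (0 : ℝ)) ih

theorem SymB.const {ι : Type} {U : Set ℝ} (hU : IsOpen U) {n : ℕ} (c : ℝ) :
    SymB U n 0 (fun (_ : ι) (_ : ℝ) => c) := by
  have h0 : ∃ C : ℝ, ∀ (i : ι), ∀ x ∈ U, |c| ≤ C * (1 + x ^ 2) ^ ((0 : ℝ) / 2) :=
    ⟨|c|, by simp⟩
  cases n with
  | zero => exact h0
  | succ n => exact SymB.mk' hU h0 (fun i x hx => hasDerivAt_const x c) (SymB.zeroFun hU)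

theorem SymB.constMul {ι : Type} {U : Set ℝ} (hU : IsOpen U) {n : ℕ} (c : ℝ) {m : ℝ}
    {f : ι → ℝ → ℝ} (hf : SymB U n m f) : SymB U n m (fun i x => c * f i x) := by
  have := SymB.mul hU (SymB.const (ι := ι) hU (n := n) c) hf
  rwa [zero_add] at this

theorem SymB.id {ι : Type} {U : Set ℝ} (hU : IsOpen U) {n : ℕ} :
    SymB U n 1 (fun (_ : ι) (x : ℝ) => x) := by
  have h0 : ∃ C : ℝ, ∀ (i : ι), ∀ x ∈ U, |x| ≤ C * (1 + x ^ 2) ^ ((1 : ℝ) / 2) := by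
    refine ⟨1, fun i x hx => ?_⟩
    rw [← Real.sqrt_eq_rpow, one_mul]
    exact Real.abs_le_sqrt (by linarith)
  cases n with
  | zero => exact h0
  | succ n =>
    refine SymB.mk' hU h0 (fun i x hx => hasDerivAt_id x) ?_
    rw [sub_self]; exact SymB.const hU 1

theorem SymB.weight {ι : Type} {U : Set ℝ} (hU : IsOpen U) {n : ℕ} :
    ∀ {s : ℝ}, SymB U n s (fun (_ : ι) (x : ℝ) => (1 + x ^ 2) ^ (s / 2)) := by
  have h0 : ∀ s : ℝ, ∃ C : ℝ, ∀ (i : ι), ∀ x ∈ U,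
      |(1 + x ^ 2) ^ (s / 2)| ≤ C * (1 + x ^ 2) ^ (s / 2) := fun s =>
    ⟨1, fun i x hx => by rw [abs_of_pos (wt_pos _ _), one_mul]⟩
  induction n with
  | zero => intro s; exact h0 s
  | succ n ih =>
    intro s
    refine SymB.mk' hU (g := fun _ x => s * (x * (1 + x ^ 2) ^ ((s - 2) / 2))) (h0 s) ?_ ?_
    · intro i x hx
      have h1 : HasDerivAt (fun x : ℝ => 1 + x ^ 2) (2 * x) x := by
        simpa using (hasDerivAt_pow 2 x).const_add 1
      have h2 := h1.rpow_const (p := s / 2) (Or.inl (by positivity))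
      convert h2 using 1
      rw [show (s - 2) / 2 = s / 2 - 1 by ring]; ring
    · have := SymB.constMul hU s (SymB.mul hU (SymB.id (ι := ι) hU (n := n)) (ih (s := s - 2)))
      rwa [show 1 + (s - 2) = s - 1 by ring] at this

theorem SymB.union {ι : Type} {U V : Set ℝ} {n : ℕ} :
    ∀ {m : ℝ} {f : ι → ℝ → ℝ}, SymB U n m f → SymB V n m f → SymB (U ∪ V) n m f := by
  have h0 : ∀ {m : ℝ} {f : ι → ℝ → ℝ},
      (∃ C : ℝ, ∀ i, ∀ x ∈ U, |f i x| ≤ C * (1 + x ^ 2) ^ (m / 2)) →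
      (∃ C : ℝ, ∀ i, ∀ x ∈ V, |f i x| ≤ C * (1 + x ^ 2) ^ (m / 2)) →
      (∃ C : ℝ, ∀ i, ∀ x ∈ U ∪ V, |f i x| ≤ C * (1 + x ^ 2) ^ (m / 2)) := by
    rintro m f ⟨C, hC⟩ ⟨D, hD⟩
    refine ⟨max C D, fun i x hx => ?_⟩
    have hw := (wt_pos x (m / 2)).le
    rcases hx with hx | hx
    · exact (hC i x hx).trans (mul_le_mul_of_nonneg_right (le_max_left _ _) hw)
    · exact (hD i x hx).trans (mul_le_mul_of_nonneg_right (le_max_right _ _) hw)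
  induction n with
  | zero => intro m f hf hg; exact h0 hf hg
  | succ n ih =>
    intro m f hf hg
    refine ⟨h0 hf.1 hg.1, ?_, ih hf.2.2 hg.2.2⟩
    rintro i x (hx | hx)
    · exact hf.2.1 i x hx
    · exact hg.2.1 i x hx

theorem SymB.iter {ι : Type} {U : Set ℝ} {n : ℕ} :
    ∀ {m : ℝ} {f : ι → ℝ → ℝ}, SymB U n m f →
    ∃ C : ℝ, ∀ i, ∀ x ∈ U, |iteratedDeriv n (f i) x| ≤ C * (1 + x ^ 2) ^ ((m - n) / 2) := by
  induction n with
  | zero => intro m f h; simpa [SymB] using h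
  | succ n ih =>
    intro m f h
    obtain ⟨C, hC⟩ := ih h.2.2
    refine ⟨C, fun i x hx => ?_⟩
    rw [iteratedDeriv_succ']
    have := hC i x hx
    rwa [show m - 1 - (n : ℝ) = m - ((n + 1 : ℕ) : ℝ) by push_cast; ring] at this

/-- Smooth functions satisfy any symbol bound on a bounded interval. -/
theorem SymB.ofSmooth {ι : Type} {n : ℕ} : ∀ {m : ℝ} {g : ℝ → ℝ}, ContDiff ℝ (⊤ : ℕ∞) g →
    SymB (Set.Ioo 0 2) n m (fun _ : ι => g) := by
  have h0 : ∀ {m : ℝ} {g : ℝ → ℝ}, ContDiff ℝ (⊤ : ℕ∞) g →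
      ∃ C : ℝ, ∀ (_ : ι), ∀ x ∈ Set.Ioo (0 : ℝ) 2, |g x| ≤ C * (1 + x ^ 2) ^ (m / 2) := by
    intro m g hg
    have hc : Continuous (fun x : ℝ => g x / (1 + x ^ 2) ^ (m / 2)) := by
      refine hg.continuous.div ?_ (fun x => (wt_pos _ _).ne')
      exact Continuous.rpow_const (by fun_prop) (fun x => Or.inl (by positivity))
    obtain ⟨C, hC⟩ := (isCompact_Icc (a := (0 : ℝ)) (b := 2)).exists_bound_of_continuousOn
      hc.continuousOn
    refine ⟨C, fun _ x hx => ?_⟩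
    have := hC x ⟨hx.1.le, hx.2.le⟩
    rwa [Real.norm_eq_abs, abs_div, abs_of_pos (wt_pos x (m / 2)),
      div_le_iff₀ (wt_pos x (m / 2))] at this
  induction n with
  | zero => intro m g hg; exact h0 hg
  | succ n ih =>
    intro m g hg
    refine ⟨h0 hg, fun i x hx => (hg.differentiable (by simp)).differentiableAt, ih ?_⟩
    exact (contDiff_infty_iff_deriv.1 hg).2

theorem SymB.inv {ι : Type} {n : ℕ} :
    SymB (Set.Ioi 1) n (-1) (fun (_ : ι) (x : ℝ) => x⁻¹) := by
  have h0 : ∃ C : ℝ, ∀ (i : ι), ∀ x ∈ Set.Ioi (1 : ℝ),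
      |x⁻¹| ≤ C * (1 + x ^ 2) ^ ((-1 : ℝ) / 2) := by
    refine ⟨2, fun i x hx => ?_⟩
    have hx : 1 < x := hx
    rw [neg_div, Real.rpow_neg (by positivity), ← Real.sqrt_eq_rpow, abs_of_pos (by positivity),
      ← div_eq_mul_inv, inv_eq_one_div, div_le_div_iff₀ (by positivity) (by positivity), one_mul]
    rw [Real.sqrt_le_left (by positivity)]
    nlinarith
  induction n with
  | zero => exact h0
  | succ n ih =>
    refine SymB.mk' isOpen_Ioi (g := fun _ x => -1 * (x⁻¹ * x⁻¹)) h0 ?_ ?_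
    · intro i x hx
      have hx : 1 < x := hx
      refine (hasDerivAt_inv (show x ≠ 0 by positivity)).congr_deriv (Eq.symm ?_)
      field_simp
    · have := SymB.constMul isOpen_Ioi (-1) (SymB.mul isOpen_Ioi ih ih)
      rwa [show (-1 : ℝ) + -1 = -1 - 1 by ring] at this

/-- `1/(sinh cosh)` -/
noncomputable def uu (x : ℝ) : ℝ := (Real.sinh x * Real.cosh x)⁻¹
/-- `coth + tanh` -/
noncomputable def ww (x : ℝ) : ℝ := Real.cosh x / Real.sinh x + Real.sinh x / Real.cosh x

theorem uu_deriv {x : ℝ} (hx : 0 < x) : HasDerivAt uu (-1 * (uu x * ww x)) x := by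
  have hs : Real.sinh x ≠ 0 := (Real.sinh_pos_iff.2 hx).ne'
  have hc : Real.cosh x ≠ 0 := (Real.cosh_pos x).ne'
  have := ((Real.hasDerivAt_sinh x).mul (Real.hasDerivAt_cosh x)).inv (mul_ne_zero hs hc)
  refine (HasDerivAt.congr_deriv this (Eq.symm ?_))
  simp only [uu, ww, Pi.mul_apply]
  field_simp
  try ring

theorem ww_deriv {x : ℝ} (hx : 0 < x) : HasDerivAt ww (-1 * (uu x * uu x)) x := by
  have hs : Real.sinh x ≠ 0 := (Real.sinh_pos_iff.2 hx).ne'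
  have hc : Real.cosh x ≠ 0 := (Real.cosh_pos x).ne'
  have := ((Real.hasDerivAt_cosh x).div (Real.hasDerivAt_sinh x) hs).add
    ((Real.hasDerivAt_sinh x).div (Real.hasDerivAt_cosh x) hc)
  refine (HasDerivAt.congr_deriv this (Eq.symm ?_))
  have h := Real.cosh_sq x
  simp only [uu]
  field_simp
  rw [h]; ring

theorem uu_bound {ι : Type} (m : ℝ) : ∃ C : ℝ, ∀ (_ : ι), ∀ x ∈ Set.Ioi (1 : ℝ),
    |uu x| ≤ C * (1 + x ^ 2) ^ (m / 2) := by
  obtain ⟨k, hk⟩ := exists_nat_ge (-(m / 2))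
  refine ⟨2 * (Nat.factorial (2 * k)) * 2 ^ k, fun _ x hx => ?_⟩
  have hx : 1 < x := hx
  have hs : x ≤ Real.sinh x := Real.self_le_sinh_iff.2 (by linarith)
  have hc : Real.exp x / 2 ≤ Real.cosh x := by
    rw [Real.cosh_eq]; have := Real.exp_pos (-x); linarith
  have he := Real.exp_pos x
  have h1 : Real.exp x / 2 ≤ Real.sinh x * Real.cosh x := by nlinarith
  have h2 : x ^ (2 * k) / (Nat.factorial (2 * k)) ≤ Real.exp x :=
    Real.pow_div_factorial_le_exp x (by linarith) _
  have hf : (0 : ℝ) < Nat.factorial (2 * k) := by exact_mod_cast Nat.factorial_pos _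
  have h3 : (1 + x ^ 2) ^ k ≤ 2 ^ k * x ^ (2 * k) := by
    rw [pow_mul, ← mul_pow]
    exact pow_le_pow_left₀ (by positivity) (by nlinarith) _
  have h4 : ((1 + x ^ 2) ^ k)⁻¹ ≤ (1 + x ^ 2) ^ (m / 2) := by
    rw [← Real.rpow_natCast, ← Real.rpow_neg (by positivity)]
    exact Real.rpow_le_rpow_of_exponent_le (by nlinarith) (by linarith)
  rw [div_le_iff₀ hf] at h2
  have hpos : 0 < Real.sinh x * Real.cosh x := by linarith [half_pos he]
  rw [uu, abs_of_pos (inv_pos.2 hpos)]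
  refine le_trans ?_ (mul_le_mul_of_nonneg_left h4 (by positivity))
  rw [← div_eq_mul_inv, le_div_iff₀ (by positivity), inv_mul_le_iff₀ hpos]
  calc (1 + x ^ 2) ^ k ≤ 2 ^ k * (Real.exp x * (Nat.factorial (2 * k))) :=
        h3.trans (mul_le_mul_of_nonneg_left h2 (by positivity))
    _ = (Real.exp x / 2) * (2 * (Nat.factorial (2 * k)) * 2 ^ k) := by ring
    _ ≤ _ := mul_le_mul_of_nonneg_right h1 (by positivity)

theorem ww_bound {ι : Type} : ∃ C : ℝ, ∀ (_ : ι), ∀ x ∈ Set.Ioi (1 : ℝ),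
    |ww x| ≤ C * (1 + x ^ 2) ^ ((0 : ℝ) / 2) := by
  refine ⟨3, fun _ x hx => ?_⟩
  have hx : 1 < x := hx
  have hs : x ≤ Real.sinh x := Real.self_le_sinh_iff.2 (by linarith)
  have hc := Real.cosh_pos x
  have hsp : 0 < Real.sinh x := by linarith
  have hq := Real.cosh_sq x
  have h1 : Real.cosh x / Real.sinh x ≤ 2 := by
    rw [div_le_iff₀ hsp]; nlinarith
  have h2 : Real.sinh x / Real.cosh x ≤ 1 := by
    rw [div_le_one hc]; exact (Real.sinh_lt_cosh x).le
  rw [zero_div, Real.rpow_zero, mul_one, ww, abs_of_pos (by positivity)]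
  linarith

theorem uw_sym {ι : Type} {n : ℕ} : (∀ m, SymB (Set.Ioi 1) n m (fun _ : ι => uu)) ∧
    SymB (Set.Ioi 1) n 0 (fun _ : ι => ww) := by
  induction n with
  | zero => exact ⟨fun m => uu_bound m, ww_bound⟩
  | succ n ih =>
    refine ⟨fun m => SymB.mk' isOpen_Ioi (g := fun _ x => -1 * (uu x * ww x)) (uu_bound m)
      (fun i x hx => uu_deriv (zero_lt_one.trans hx)) ?_,
      SymB.mk' isOpen_Ioi (g := fun _ x => -1 * (uu x * uu x)) ww_bound
      (fun i x hx => ww_deriv (zero_lt_one.trans hx)) ?_⟩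
    · have := SymB.constMul isOpen_Ioi (-1) (SymB.mul isOpen_Ioi (ih.1 (m - 1)) ih.2)
      rwa [add_zero] at this
    · have := SymB.constMul isOpen_Ioi (-1) (SymB.mul isOpen_Ioi (ih.1 (0 - 1)) (ih.1 0))
      rwa [add_zero] at this

/-- The unscaled symbol. -/
noncomputable def FF (y : ℝ) : ℝ := Real.sqrt (Real.tanh y / y)

theorem FF_deriv {x : ℝ} (hx : 0 < x) :
    HasDerivAt FF ((1 / 2) * ((uu x + -1 * x⁻¹) * FF x)) x := by
  have hs := Real.sinh_pos_iff.2 hx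
  have hc := Real.cosh_pos x
  have hq := Real.cosh_sq x
  have hp : 0 < Real.tanh x / x := by
    rw [Real.tanh_eq_sinh_div_cosh]; positivity
  have ht : HasDerivAt (fun y => Real.tanh y / y)
      ((uu x + -1 * x⁻¹) * (Real.tanh x / x)) x := by
    have h := ((Real.hasDerivAt_sinh x).div (Real.hasDerivAt_cosh x) hc.ne').div
      (hasDerivAt_id x) hx.ne'
    have e : (fun y => Real.tanh y / y) = (Real.sinh / Real.cosh) / id := by
      funext y; simp [Real.tanh_eq_sinh_div_cosh]
    rw [e]
    refine (HasDerivAt.congr_deriv h (Eq.symm ?_))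
    simp only [uu, Real.tanh_eq_sinh_div_cosh, Pi.div_apply, id]
    field_simp
    rw [hq]; ring
  have := ht.sqrt hp.ne'
  refine (HasDerivAt.congr_deriv this (Eq.symm ?_))
  have hF : 0 < FF x := Real.sqrt_pos.2 hp
  have h2 : Real.tanh x / x = FF x * FF x := (Real.mul_self_sqrt hp.le).symm
  change _ = (uu x + -1 * x⁻¹) * (Real.tanh x / x) / (2 * FF x)
  rw [h2]; field_simp

theorem FF_large {ι : Type} {n : ℕ} : SymB (Set.Ioi 1) n 0 (fun _ : ι => FF) := by
  have h0 : ∃ C : ℝ, ∀ (_ : ι), ∀ x ∈ Set.Ioi (1 : ℝ),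
      |FF x| ≤ C * (1 + x ^ 2) ^ ((0 : ℝ) / 2) := by
    refine ⟨1, fun _ x hx => ?_⟩
    have hx : 1 < x := hx
    rw [zero_div, Real.rpow_zero, mul_one, FF, abs_of_nonneg (Real.sqrt_nonneg _),
      Real.sqrt_le_one, div_le_one (by linarith)]
    exact (Real.tanh_lt_one x).le.trans hx.le
  induction n with
  | zero => exact h0
  | succ n ih =>
    refine SymB.mk' isOpen_Ioi h0 (fun i x hx => FF_deriv (zero_lt_one.trans hx)) ?_
    have := SymB.constMul isOpen_Ioi (1 / 2) (SymB.mul isOpen_Ioi (SymB.add isOpen_Ioi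
      (uw_sym (ι := ι) (n := n).1 (-1)) (SymB.constMul isOpen_Ioi (-1) SymB.inv)) ih)
    rwa [show (-1 : ℝ) + 0 = 0 - 1 by ring] at this

theorem dslope_sinh_smooth : ContDiff ℝ (⊤ : ℕ∞) (dslope Real.sinh 0) := by
  rw [contDiff_iff_contDiffAt]
  intro x
  by_cases hx : x = 0
  · subst hx
    have h : AnalyticAt ℝ Real.sinh 0 := Real.analyticAt_sinh
    obtain ⟨p, hp⟩ := h
    exact hp.has_fpower_series_dslope_fslope.analyticAt.contDiffAt
  · have h1 : ContDiffAt ℝ (⊤ : ℕ∞) (fun y => Real.sinh y / y) x :=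
      Real.contDiff_sinh.contDiffAt.div contDiffAt_id hx
    refine h1.congr_of_eventuallyEq ?_
    filter_upwards [isOpen_ne.mem_nhds hx] with y hy
    rw [dslope_of_ne _ hy, slope_def_field]; simp

theorem FF_small {ι : Type} {n : ℕ} : SymB (Set.Ioo 0 2) n 0 (fun _ : ι => FF) := by
  have hpos : ∀ x : ℝ, 0 < dslope Real.sinh 0 x := by
    intro x
    rcases lt_trichotomy x 0 with h | h | h
    · rw [dslope_of_ne _ h.ne, slope_def_field]
      simpa using div_pos_of_neg_of_neg (Real.sinh_neg_iff.2 h) h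
    · subst h; rw [dslope_same]; simp
    · rw [dslope_of_ne _ h.ne', slope_def_field]
      simpa using div_pos (Real.sinh_pos_iff.2 h) h
  have hg : ContDiff ℝ (⊤ : ℕ∞) (fun x => Real.sqrt (dslope Real.sinh 0 x / Real.cosh x)) :=
    (dslope_sinh_smooth.div Real.contDiff_cosh (fun x => (Real.cosh_pos x).ne')).sqrt
      (fun x => (div_pos (hpos x) (Real.cosh_pos x)).ne')
  refine SymB.congr isOpen_Ioo (SymB.ofSmooth hg) ?_
  intro i x hx
  rw [FF, dslope_of_ne _ hx.1.ne', slope_def_field, Real.tanh_eq_sinh_div_cosh]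
  congr 1
  simp only [Real.sinh_zero, sub_zero]
  rw [div_right_comm]

theorem FF_sym {ι : Type} {n : ℕ} : SymB (Set.Ioi 0) n 0 (fun _ : ι => FF) := by
  have h := SymB.union (FF_small (ι := ι) (n := n)) FF_large
  have e : Set.Ioo (0 : ℝ) 2 ∪ Set.Ioi 1 = Set.Ioi 0 := by
    ext x
    simp only [Set.mem_union, Set.mem_Ioo, Set.mem_Ioi]
    constructor
    · rintro (h | h) <;> linarith
    · intro h
      by_cases h2 : x < 2
      · exact Or.inl ⟨h, h2⟩
      · right; linarith
  rwa [e] at h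

theorem SymB.scale {n : ℕ} : ∀ {k : ℕ} {f : ℝ → ℝ},
    SymB (Set.Ioi 0) n (-(k : ℝ)) (fun _ : Unit => f) →
    SymB (Set.Ioi 0) n (-(k : ℝ)) (fun (r : Set.Ioc (0 : ℝ) 1) (x : ℝ) =>
      (r : ℝ) ^ k * f (r * x)) := by
  have h0 : ∀ {k : ℕ} {f : ℝ → ℝ},
      (∃ C : ℝ, ∀ (_ : Unit), ∀ x ∈ Set.Ioi (0 : ℝ), |f x| ≤ C * (1 + x ^ 2) ^ (-(k : ℝ) / 2)) →
      ∃ C : ℝ, ∀ (r : Set.Ioc (0 : ℝ) 1), ∀ x ∈ Set.Ioi (0 : ℝ),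
        |(r : ℝ) ^ k * f (r * x)| ≤ C * (1 + x ^ 2) ^ (-(k : ℝ) / 2) := by
    rintro k f ⟨C, hC⟩
    refine ⟨C, ?_⟩
    rintro ⟨r, hr0, hr1⟩ x hx
    have hx : 0 < x := hx
    have h := hC () (r * x) (mul_pos hr0 hx)
    have hC0 : 0 ≤ C := by
      by_contra hn
      have := (abs_nonneg _).trans h
      have := mul_neg_of_neg_of_pos (not_le.1 hn) (wt_pos (r * x) (-(k : ℝ) / 2))
      linarith
    have e : r ^ k = ((r ^ 2)⁻¹) ^ (-(k : ℝ) / 2) := by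
      rw [neg_div, Real.rpow_neg (by positivity), Real.inv_rpow (by positivity), inv_inv,
        ← Real.rpow_natCast r 2, ← Real.rpow_mul hr0.le, ← Real.rpow_natCast]
      congr 1; push_cast; ring
    have key : r ^ k * (1 + (r * x) ^ 2) ^ (-(k : ℝ) / 2) ≤ (1 + x ^ 2) ^ (-(k : ℝ) / 2) := by
      rw [e, ← Real.mul_rpow (by positivity) (by positivity)]
      apply Real.rpow_le_rpow_of_nonpos (by positivity)
      · rw [← div_eq_inv_mul, le_div_iff₀ (by positivity)]
        nlinarith
      · have : (0 : ℝ) ≤ k := Nat.cast_nonneg k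
        linarith
    show |r ^ k * f (r * x)| ≤ _
    rw [abs_mul, abs_of_pos (pow_pos hr0 k)]
    calc _ ≤ r ^ k * (C * (1 + (r * x) ^ 2) ^ (-(k : ℝ) / 2)) :=
          mul_le_mul_of_nonneg_left h (by positivity)
      _ = C * (r ^ k * (1 + (r * x) ^ 2) ^ (-(k : ℝ) / 2)) := by ring
      _ ≤ _ := mul_le_mul_of_nonneg_left key hC0
  induction n with
  | zero => intro k f h; exact h0 h
  | succ n ih =>
    intro k f h
    have e : (-(k : ℝ)) - 1 = -((k + 1 : ℕ) : ℝ) := by push_cast; ring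
    refine SymB.mk' isOpen_Ioi
      (g := fun (r : Set.Ioc (0 : ℝ) 1) x => (r : ℝ) ^ (k + 1) * deriv f (r * x)) (h0 h.1) ?_ ?_
    · rintro ⟨r, hr0, hr1⟩ x hx
      have hd := (h.2.1 () (r * x) (mul_pos hr0 hx)).hasDerivAt
      have hl : HasDerivAt (fun y : ℝ => r * y) r x := by
        simpa using (hasDerivAt_id x).const_mul r
      have := (hd.comp x hl).const_mul (r ^ k)
      refine (HasDerivAt.congr_deriv this (Eq.symm ?_))
      ring
    · rw [e]
      refine ih ?_
      rw [← e]; exact h.2.2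

theorem sqrtT_Js_symbol_class (s : ℝ) (n : ℕ) :
    ∃ C > 0, ∀ μ : ℝ, 0 < μ → μ ≤ 1 → ∀ ξ : ℝ, 0 < ξ →
      (1 + ξ ^ 2) ^ (((n : ℝ) - s)/2) *
        |iteratedDeriv n (fun x => Real.sqrt (Tpos μ x) * (1 + x ^ 2) ^ (s/2)) ξ| ≤ C := by
  have h1 : SymB (Set.Ioi 0) n (-((0 : ℕ) : ℝ)) (fun _ : Unit => FF) := by
    rw [Nat.cast_zero, neg_zero]; exact FF_sym
  have h2 := SymB.mul isOpen_Ioi (SymB.scale h1) (SymB.weight isOpen_Ioi (s := s))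
  obtain ⟨C, hC⟩ := h2.iter
  refine ⟨max C 1, by positivity, fun μ hμ hμ1 ξ hξ => ?_⟩
  have h := hC ⟨Real.sqrt μ, Real.sqrt_pos.2 hμ, Real.sqrt_le_one.2 hμ1⟩ ξ hξ
  simp only [pow_zero, one_mul, Nat.cast_zero, neg_zero, zero_add] at h
  change |iteratedDeriv n (fun x => Real.sqrt (Tpos μ x) * (1 + x ^ 2) ^ (s/2)) ξ| ≤ _ at h
  refine le_trans ?_ (le_max_left C 1)
  calc _ ≤ (1 + ξ ^ 2) ^ (((n : ℝ) - s)/2) * (C * (1 + ξ ^ 2) ^ ((s - n) / 2)) :=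
        mul_le_mul_of_nonneg_left h (wt_pos _ _).le
    _ = C * ((1 + ξ ^ 2) ^ (((n : ℝ) - s)/2) * (1 + ξ ^ 2) ^ ((s - n) / 2)) := by ring
    _ = C := by
        rw [← Real.rpow_add (by positivity), show ((n : ℝ) - s) / 2 + (s - n) / 2 = 0 by ring,
          Real.rpow_zero, mul_one]
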